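/- arXiv:2011.08890 — 2 statements merged into one kernel-verified Lean document; each statement's English description precedes it below -/
import Mathlib

section
/- For every smooth function ψ : ℝ³ → ℂ⁴ and every x ∈ ℝ³, ((Σ·L)((Σ·L)ψ))(x) = (L²ψ)(x) − ((Σ·L)ψ)(x). -/
noncomputable section

open Matrix

/-- Physical space ℝ³. -/
abbrev E3 := EuclideanSpace ℝ (Fin 3)

/-- The Pauli matrices σ₁, σ₂, σ₃ (indexed by `Fin 3`, with `pauli 0 = σ₁`, etc.). -/
def pauli : Fin 3 → Matrix (Fin 2) (Fin 2) ℂ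
  | 0 => !![0, 1; 1, 0]
  | 1 => !![0, -Complex.I; Complex.I, 0]
  | 2 => !![1, 0; 0, -1]

/-- The 4×4 block matrix `[[A, B], [C, D]]` built from 2×2 blocks. -/
def qblock (A B C D : Matrix (Fin 2) (Fin 2) ℂ) : Matrix (Fin 4) (Fin 4) ℂ :=
  Matrix.reindex finSumFinEquiv finSumFinEquiv (Matrix.fromBlocks A B C D)

/-- The Dirac matrix `β = γ⁰ = [[I₂,0],[0,−I₂]]`. -/
def betaM : Matrix (Fin 4) (Fin 4) ℂ := qblock 1 0 0 (-1)

/-- The spin matrices `Σⱼ = [[σⱼ,0],[0,σⱼ]]` for j = 1,2,3. -/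
def SigM (j : Fin 3) : Matrix (Fin 4) (Fin 4) ℂ := qblock (pauli j) 0 0 (pauli j)

/-- The partial derivative `∂ⱼψ` of a ℂ⁴-valued function on ℝ³. -/
def pd (j : Fin 3) (ψ : E3 → Fin 4 → ℂ) : E3 → Fin 4 → ℂ :=
  fun x => fderiv ℝ ψ x (EuclideanSpace.single j 1)

/-- The orbital angular momentum operator `Lⱼψ = −i (x × ∇ψ)ⱼ` (cyclic indices in `Fin 3`). -/
def Lop (j : Fin 3) (ψ : E3 → Fin 4 → ℂ) : E3 → Fin 4 → ℂ :=
  fun x => (-Complex.I) • (x (j + 1) • pd (j + 2) ψ x - x (j + 2) • pd (j + 1) ψ x)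

/-- The operator `L²ψ = Σⱼ Lⱼ(Lⱼψ)`. -/
def L2op (ψ : E3 → Fin 4 → ℂ) : E3 → Fin 4 → ℂ :=
  fun x => ∑ j, Lop j (Lop j ψ) x

/-- The operator `(Σ·L)ψ = Σⱼ Σⱼ(Lⱼψ)`. -/
def SigL (ψ : E3 → Fin 4 → ℂ) : E3 → Fin 4 → ℂ :=
  fun x => ∑ j, (SigM j).mulVec (Lop j ψ x)

/-- Dirac's operator `Kψ = β(ψ + (Σ·L)ψ)`. -/
def Kop (ψ : E3 → Fin 4 → ℂ) : E3 → Fin 4 → ℂ :=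
  fun x => betaM.mulVec (ψ x + SigL ψ x)



/-!
For vectors of operators `a`, `b` commuting with the spin matrices, the Pauli relations give
`(Σ·a)(Σ·b) = a·b + i Σ·(a × b)`. For `a = b = L` the cross product does not vanish, because the
components of `L` do not commute: `[Lⱼ, Lⱼ₊₁] = i Lⱼ₊₂` says that `L × L = i L`, so the second
term is `i² Σ·L = -Σ·L`.
-/

section PauliTriple

theorem sum_fin_three_cyclic {M : Type*} [AddCommMonoid M] (j : Fin 3) (f : Fin 3 → M) :
    ∑ k, f k = f j + f (j + 1) + f (j + 2) := by
  rw [← Equiv.sum_comp (Equiv.addLeft j), Fin.sum_univ_three]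
  simp

/-- Three elements of a complex algebra satisfying the multiplication table of the Pauli matrices,
the indices being cyclic in `Fin 3`. The products in the opposite order are determined by these,
see `IsPauliTriple.add_one_mul`. -/
structure IsPauliTriple {A : Type*} [Ring A] [Algebra ℂ A] (s : Fin 3 → A) : Prop where
  mul_self (j : Fin 3) : s j * s j = 1
  mul_add_one (j : Fin 3) : s j * s (j + 1) = Complex.I • s (j + 2)

namespace IsPauliTriple

theorem add_one_mul {A : Type*} [Ring A] [Algebra ℂ A] {s : Fin 3 → A}
    (hs : IsPauliTriple s) (j : Fin 3) :
    s (j + 1) * s j = -Complex.I • s (j + 2) := by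
  have h : s (j + 1) * s (j + 2) = Complex.I • s j := by
    simpa [add_assoc] using hs.mul_add_one (j + 1)
  calc s (j + 1) * s j = -Complex.I • (s (j + 1) * (Complex.I • s j)) := by
        simp [smul_smul]
    _ = -Complex.I • (s (j + 1) * s (j + 1) * s (j + 2)) := by rw [← h, mul_assoc]
    _ = -Complex.I • s (j + 2) := by rw [hs.mul_self, one_mul]

theorem sum_mulVec_sum_mulVec {n : Type*} [Fintype n] [DecidableEq n]
    {s : Fin 3 → Matrix n n ℂ} (hs : IsPauliTriple s) (v : Fin 3 → Fin 3 → n → ℂ) :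
    ∑ j, s j *ᵥ ∑ k, s k *ᵥ v j k =
      (∑ j, v j j) + Complex.I • ∑ j, s (j + 2) *ᵥ (v j (j + 1) - v (j + 1) j) := by
  have inner_sum (j : Fin 3) : s j *ᵥ ∑ k, s k *ᵥ v j k = v j j +
      Complex.I • (s (j + 2) *ᵥ v j (j + 1) - s (j + 1) *ᵥ v j (j + 2)) := by
    have hs' : s j * s (j + 2) = -Complex.I • s (j + 1) := by
      simpa [add_assoc] using hs.add_one_mul (j + 2)
    simp only [sum_fin_three_cyclic j, Matrix.mulVec_add, Matrix.mulVec_mulVec, hs.mul_self,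
      hs.mul_add_one, hs', Matrix.one_mulVec, Matrix.smul_mulVec]
    module
  have reindex : ∑ j, s (j + 1) *ᵥ v j (j + 2) = ∑ j, s (j + 2) *ᵥ v (j + 1) j := by
    rw [← Equiv.sum_comp (Equiv.addRight (1 : Fin 3))]
    simp [add_assoc]
  simp only [inner_sum, Finset.sum_add_distrib, ← Finset.smul_sum, Finset.sum_sub_distrib,
    reindex, Matrix.mulVec_sub]

end IsPauliTriple

end PauliTriple

section SpinMatrices

theorem isPauliTriple_pauli : IsPauliTriple pauli where
  mul_self j := by
    fin_cases j <;> simp [pauli, Matrix.one_fin_two]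
  mul_add_one j := by
    fin_cases j <;> simp [pauli]

theorem qblock_diag_mul (A B C D : Matrix (Fin 2) (Fin 2) ℂ) :
    qblock A 0 0 B * qblock C 0 0 D = qblock (A * C) 0 0 (B * D) := by
  simp [qblock, Matrix.submatrix_mul_equiv, Matrix.fromBlocks_multiply]

theorem qblock_one : qblock 1 0 0 1 = 1 := by
  simp [qblock]

theorem smul_qblock (c : ℂ) (A B C D : Matrix (Fin 2) (Fin 2) ℂ) :
    c • qblock A B C D = qblock (c • A) (c • B) (c • C) (c • D) := by
  simp [qblock, ← Matrix.fromBlocks_smul, Matrix.submatrix_smul]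

theorem isPauliTriple_SigM : IsPauliTriple SigM where
  mul_self j := by
    rw [SigM, qblock_diag_mul, isPauliTriple_pauli.mul_self, qblock_one]
  mul_add_one j := by
    simp only [SigM, qblock_diag_mul, isPauliTriple_pauli.mul_add_one, smul_qblock, smul_zero]

end SpinMatrices

section Calculus

variable {𝕜 E F : Type*} [NontriviallyNormedField 𝕜] [NormedAddCommGroup E] [NormedSpace 𝕜 E]
  [NormedAddCommGroup F] [NormedSpace 𝕜 F]

theorem fderiv_fderiv_apply {f : E → F} {x : E} (hf : DifferentiableAt 𝕜 (fderiv 𝕜 f) x)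
    (v w : E) : fderiv 𝕜 (fun y ↦ fderiv 𝕜 f y v) x w = fderiv 𝕜 (fderiv 𝕜 f) x w v := by
  simp [fderiv_clm_apply hf (differentiableAt_const v)]

theorem fderiv_fderiv_apply_comm {f : E → F} {x : E}
    (hf : ContDiffAt 𝕜 (minSmoothness 𝕜 2) f x) (v w : E) :
    fderiv 𝕜 (fun y ↦ fderiv 𝕜 f y v) x w = fderiv 𝕜 (fun y ↦ fderiv 𝕜 f y w) x v := by
  have hf' : DifferentiableAt 𝕜 (fderiv 𝕜 f) x :=
    ((hf.of_le le_minSmoothness).fderiv_right (m := 1) one_add_one_eq_two.le).differentiableAt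
      one_ne_zero
  rw [fderiv_fderiv_apply hf', fderiv_fderiv_apply hf', hf.isSymmSndFDerivAt le_rfl]

variable {𝔸 m n : Type*} [NormedCommRing 𝔸] [NormedAlgebra 𝕜 𝔸] [Fintype n]

variable (𝕜) in
/-- Multiplication by a constant matrix as a continuous linear map, over a field of scalars `𝕜`
possibly smaller than the ring `𝔸` of the entries. -/
def mulVecCLM (M : Matrix m n 𝔸) : (n → 𝔸) →L[𝕜] (m → 𝔸) where
  toLinearMap := M.mulVecLin.restrictScalars 𝕜
  cont := continuous_const.matrix_mulVec continuous_id

theorem fderiv_sum_mulVec_apply [Finite m] {ι : Type*} (s : Finset ι)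
    (M : ι → Matrix m n 𝔸) {f : ι → E → n → 𝔸} {x : E}
    (hf : ∀ k ∈ s, DifferentiableAt 𝕜 (f k) x) (v : E) :
    fderiv 𝕜 (fun y ↦ ∑ k ∈ s, M k *ᵥ f k y) x v = ∑ k ∈ s, M k *ᵥ fderiv 𝕜 (f k) x v := by
  cases nonempty_fintype m
  have h : HasFDerivAt (fun y ↦ ∑ k ∈ s, M k *ᵥ f k y)
      (∑ k ∈ s, (mulVecCLM 𝕜 (M k)).comp (fderiv 𝕜 (f k) x)) x :=
    HasFDerivAt.fun_sum fun k hk ↦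
      (mulVecCLM 𝕜 (M k)).hasFDerivAt.comp x (hf k hk).hasFDerivAt
  rw [h.fderiv, _root_.sum_apply]
  rfl

end Calculus

section AngularMomentum

variable {ψ : E3 → Fin 4 → ℂ} {x : E3}

theorem pd_comm (hψ : ContDiffAt ℝ 2 ψ x) (j k : Fin 3) :
    pd j (pd k ψ) x = pd k (pd j ψ) x :=
  fderiv_fderiv_apply_comm (by simpa using hψ) _ _

theorem differentiableAt_pd (hψ : ContDiffAt ℝ 2 ψ x) (j : Fin 3) :
    DifferentiableAt ℝ (pd j ψ) x :=
  ((hψ.fderiv_right (m := 1) one_add_one_eq_two.le).differentiableAt one_ne_zero).clm_apply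
    (differentiableAt_const _)

theorem differentiableAt_Lop (hψ : ContDiffAt ℝ 2 ψ x) (j : Fin 3) :
    DifferentiableAt ℝ (Lop j ψ) x := by
  have := differentiableAt_pd hψ
  unfold Lop
  fun_prop

theorem pd_coord_smul (hψ : DifferentiableAt ℝ ψ x) (i k : Fin 3) :
    pd k (fun y ↦ y i • ψ y) x = x i • pd k ψ x + if i = k then ψ x else 0 := by
  have hi : HasFDerivAt (fun y : E3 ↦ y i) (EuclideanSpace.proj i : E3 →L[ℝ] ℝ) x :=
    (EuclideanSpace.proj i : E3 →L[ℝ] ℝ).hasFDerivAt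
  simp [pd, (hi.fun_smul hψ.hasFDerivAt).fderiv]

theorem pd_Lop (hψ : ContDiffAt ℝ 2 ψ x) (j k : Fin 3) :
    pd k (Lop j ψ) x = -Complex.I •
      ((x (j + 1) • pd k (pd (j + 2) ψ) x + if j + 1 = k then pd (j + 2) ψ x else 0) -
        (x (j + 2) • pd k (pd (j + 1) ψ) x + if j + 2 = k then pd (j + 1) ψ x else 0)) := by
  have hpd := differentiableAt_pd hψ
  rw [← pd_coord_smul (hpd _), ← pd_coord_smul (hpd _)]
  unfold Lop
  rw [pd, fderiv_fun_const_smul (by fun_prop), fderiv_fun_sub (by fun_prop) (by fun_prop)]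
  rfl

theorem Lop_commutator (hψ : ContDiffAt ℝ 2 ψ x) (j : Fin 3) :
    Lop j (Lop (j + 1) ψ) x - Lop (j + 1) (Lop j ψ) x = Complex.I • Lop (j + 2) ψ x := by
  -- The second-order terms cancel by `pd_comm`; the Kronecker deltas of `pd_Lop` leave `Lⱼ₊₂`.
  rw [Lop, Lop, Lop]
  simp only [pd_Lop hψ, add_assoc, Fin.reduceAdd, add_zero, pd_comm hψ j (j + 1),
    pd_comm hψ j (j + 2), pd_comm hψ (j + 1) (j + 2)]
  simp only [left_eq_add, add_eq_left, add_right_inj, Fin.isValue, Fin.reduceEq, one_ne_zero,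
    ↓reduceIte, add_zero]
  module

theorem Lop_sum_mulVec {ι : Type*} (s : Finset ι) (M : ι → Matrix (Fin 4) (Fin 4) ℂ)
    {f : ι → E3 → Fin 4 → ℂ} (hf : ∀ k ∈ s, DifferentiableAt ℝ (f k) x) (j : Fin 3) :
    Lop j (fun y ↦ ∑ k ∈ s, M k *ᵥ f k y) x = ∑ k ∈ s, M k *ᵥ Lop j (f k) x := by
  simp only [Lop, pd, fderiv_sum_mulVec_apply s M hf, Matrix.mulVec_smul, Matrix.mulVec_sub,
    Finset.smul_sum, Finset.sum_sub_distrib, smul_sub]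

theorem Lop_SigL (hψ : ContDiffAt ℝ 2 ψ x) (j : Fin 3) :
    Lop j (SigL ψ) x = ∑ k, SigM k *ᵥ Lop j (Lop k ψ) x :=
  Lop_sum_mulVec _ SigM (fun k _ ↦ differentiableAt_Lop hψ k) j

end AngularMomentum

theorem SigL_SigL_general {ψ : E3 → Fin 4 → ℂ} {x : E3} (hψ : ContDiffAt ℝ 2 ψ x) :
    SigL (SigL ψ) x = L2op ψ x - SigL ψ x := by
  calc SigL (SigL ψ) x
      = ∑ j, SigM j *ᵥ ∑ k, SigM k *ᵥ Lop j (Lop k ψ) x :=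
        Finset.sum_congr rfl fun j _ ↦ by rw [Lop_SigL hψ]
    _ = L2op ψ x + Complex.I • ∑ j, SigM (j + 2) *ᵥ
          (Lop j (Lop (j + 1) ψ) x - Lop (j + 1) (Lop j ψ) x) :=
        isPauliTriple_SigM.sum_mulVec_sum_mulVec fun j k ↦ Lop j (Lop k ψ) x
    _ = L2op ψ x - ∑ j, SigM (j + 2) *ᵥ Lop (j + 2) ψ x := by
        simp only [Lop_commutator hψ, Matrix.mulVec_smul, ← Finset.smul_sum, smul_smul,
          Complex.I_mul_I, neg_one_smul, ← sub_eq_add_neg]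
    _ = L2op ψ x - SigL ψ x := by
        rw [SigL, ← Equiv.sum_comp (Equiv.addRight (2 : Fin 3)) fun j ↦ SigM j *ᵥ Lop j ψ x]
        rfl

/-- For smooth `ψ : ℝ³ → ℂ⁴`: `(Σ·L)((Σ·L)ψ) = L²ψ − (Σ·L)ψ`. -/
theorem SigL_SigL (ψ : E3 → Fin 4 → ℂ) (hψ : ContDiff ℝ (⊤ : ℕ∞) ψ) (x : E3) :
    SigL (SigL ψ) x = L2op ψ x - SigL ψ x :=
  SigL_SigL_general (contDiff_infty.1 hψ 2).contDiffAt

end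
end

section
/- For every smooth function ψ : ℝ³∖{0} → ℂ⁴ and every x ∈ ℝ³∖{0}, ((α·(−i∇))ψ)(x) = −i α_r(x)( (∂_rψ)(x) + ψ(x)/|x| − (1/|x|)(β(Kψ))(x) ), where (α·(−i∇))ψ = Σ_j α_j(−i∂_jψ). -/
noncomputable section

open Matrix

/-- The Dirac matrices `αⱼ = [[0,σⱼ],[σⱼ,0]]` for j = 1,2,3. -/
def alphaM (j : Fin 3) : Matrix (Fin 4) (Fin 4) ℂ := qblock 0 (pauli j) (pauli j) 0

/-- The radial Dirac matrix `α_r(x) = Σⱼ (xⱼ/|x|) αⱼ`. -/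
def alphaR (x : E3) : Matrix (Fin 4) (Fin 4) ℂ :=
  ∑ j, ((x j / ‖x‖ : ℝ) : ℂ) • alphaM j

/-- The radial derivative `∂_rψ(x) = (x/|x|)·∇ψ(x)`. -/
def radialD (ψ : E3 → Fin 4 → ℂ) : E3 → Fin 4 → ℂ :=
  fun x => ∑ j, (x j / ‖x‖) • pd j ψ x

/-! Since `αⱼαₖ = δⱼₖ + i εⱼₖₗ Σₗ`, multiplying `α·∇` by `α_r` from the left gives
`∂_r + i Σ·(x/|x| × ∇) = ∂_r - (Σ·L)/|x|`. As `α_r² = 1`, multiplying once more by `α_r` recovers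
`α·∇`, and `β² = 1` turns `(Σ·L)ψ` into `β(Kψ) - ψ`. -/

theorem pauli_mul_self (j : Fin 3) : pauli j * pauli j = 1 := by
  fin_cases j <;> simp [pauli, one_fin_two]

theorem pauli_add_one_mul_pauli_add_two (j : Fin 3) :
    pauli (j + 1) * pauli (j + 2) = Complex.I • pauli j := by
  fin_cases j <;> simp [pauli]

theorem pauli_add_two_mul_pauli_add_one (j : Fin 3) :
    pauli (j + 2) * pauli (j + 1) = -Complex.I • pauli j := by
  fin_cases j <;> simp [pauli]

theorem qblock_smul (c : ℂ) (A B C D : Matrix (Fin 2) (Fin 2) ℂ) :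
    qblock (c • A) (c • B) (c • C) (c • D) = c • qblock A B C D := by
  simp only [qblock, ← fromBlocks_smul, reindex_apply, submatrix_smul, Pi.smul_apply]

theorem qblock_mul_qblock (A B C D A' B' C' D' : Matrix (Fin 2) (Fin 2) ℂ) :
    qblock A B C D * qblock A' B' C' D' =
      qblock (A * A' + B * C') (A * B' + B * D') (C * A' + D * C') (C * B' + D * D') := by
  simp only [qblock, reindex_apply, submatrix_mul_equiv, fromBlocks_multiply]

theorem betaM_mul_self : betaM * betaM = 1 := by
  simp [betaM, qblock_mul_qblock, qblock_one]

theorem alphaM_mul_alphaM (j k : Fin 3) :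
    alphaM j * alphaM k = qblock (pauli j * pauli k) 0 0 (pauli j * pauli k) := by
  simp [alphaM, qblock_mul_qblock]

theorem alphaM_mul_alphaM_eq_smul_SigM {j k l : Fin 3} {c : ℂ}
    (h : pauli j * pauli k = c • pauli l) : alphaM j * alphaM k = c • SigM l := by
  rw [alphaM_mul_alphaM, h, SigM, ← qblock_smul, smul_zero]

theorem alphaM_mul_self (j : Fin 3) : alphaM j * alphaM j = 1 := by
  rw [alphaM_mul_alphaM, pauli_mul_self, qblock_one]

theorem alphaM_add_one_mul_alphaM_add_two (j : Fin 3) :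
    alphaM (j + 1) * alphaM (j + 2) = Complex.I • SigM j :=
  alphaM_mul_alphaM_eq_smul_SigM (pauli_add_one_mul_pauli_add_two j)

theorem alphaM_add_two_mul_alphaM_add_one (j : Fin 3) :
    alphaM (j + 2) * alphaM (j + 1) = -Complex.I • SigM j :=
  alphaM_mul_alphaM_eq_smul_SigM (pauli_add_two_mul_pauli_add_one j)

theorem sum_sum_fin_three_eq_sum_cyclic {M : Type*} [AddCommMonoid M] (f : Fin 3 → Fin 3 → M) :
    ∑ j, ∑ k, f j k = ∑ j, (f j j + (f (j + 1) (j + 2) + f (j + 2) (j + 1))) := by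
  simp only [Fin.sum_univ_three, Fin.isValue, Fin.reduceAdd, zero_add]
  abel

/-- The matrix `α·a = Σⱼ aⱼ αⱼ` of a complex vector `a`, so that `α_r(x) = α·(x/|x|)`. -/
def alphaDot (a : Fin 3 → ℂ) : Matrix (Fin 4) (Fin 4) ℂ :=
  ∑ j, a j • alphaM j

/-- Dirac's identity; the components of `v` are spinors so that it applies to a gradient. -/
theorem alphaDot_mulVec_sum_alphaM_mulVec (a : Fin 3 → ℂ) (v : Fin 3 → Fin 4 → ℂ) :
    alphaDot a *ᵥ ∑ k, alphaM k *ᵥ v k =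
      ∑ j, a j • v j +
        Complex.I • ∑ j, SigM j *ᵥ (a (j + 1) • v (j + 2) - a (j + 2) • v (j + 1)) := by
  have hcross (j : Fin 3) :
      a (j + 1) • (alphaM (j + 1) * alphaM (j + 2)) *ᵥ v (j + 2) +
          a (j + 2) • (alphaM (j + 2) * alphaM (j + 1)) *ᵥ v (j + 1) =
        Complex.I • SigM j *ᵥ (a (j + 1) • v (j + 2) - a (j + 2) • v (j + 1)) := by
    simp only [alphaM_add_one_mul_alphaM_add_two, alphaM_add_two_mul_alphaM_add_one,
      smul_mulVec, mulVec_sub, mulVec_smul]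
    module
  calc alphaDot a *ᵥ ∑ k, alphaM k *ᵥ v k
      = ∑ j, ∑ k, a j • (alphaM j * alphaM k) *ᵥ v k := by
        rw [alphaDot, sum_mulVec]
        simp only [smul_mulVec, mulVec_sum, ← mulVec_mulVec]
    _ = ∑ j, (a j • v j +
          Complex.I • SigM j *ᵥ (a (j + 1) • v (j + 2) - a (j + 2) • v (j + 1))) := by
        simp only [sum_sum_fin_three_eq_sum_cyclic, hcross, alphaM_mul_self, one_mulVec]
    _ = _ := by rw [Finset.sum_add_distrib, Finset.smul_sum]

theorem alphaDot_mulVec_alphaDot_mulVec (a : Fin 3 → ℂ) (w : Fin 4 → ℂ) :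
    alphaDot a *ᵥ (alphaDot a *ᵥ w) = (a ⬝ᵥ a) • w := by
  have hw : alphaDot a *ᵥ w = ∑ k, alphaM k *ᵥ (a k • w) := by
    simp only [alphaDot, sum_mulVec, smul_mulVec, mulVec_smul]
  have hcross (j : Fin 3) : a (j + 1) • a (j + 2) • w - a (j + 2) • a (j + 1) • w = 0 := by
    rw [smul_comm, sub_self]
  rw [hw, alphaDot_mulVec_sum_alphaM_mulVec]
  simp only [hcross, mulVec_zero, Finset.sum_const_zero, smul_zero, add_zero]
  simp only [smul_smul, dotProduct, Finset.sum_smul]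

theorem alphaR_eq_alphaDot (x : E3) : alphaR x = alphaDot fun j => ((x j / ‖x‖ : ℝ) : ℂ) :=
  rfl

theorem sum_div_norm_mul_self {ι : Type*} [Fintype ι] {x : EuclideanSpace ℝ ι} (hx : x ≠ 0) :
    ∑ j, x j / ‖x‖ * (x j / ‖x‖) = 1 := by
  have hnorm : ‖x‖ ^ 2 ≠ 0 := pow_ne_zero 2 (norm_ne_zero_iff.mpr hx)
  simp only [← sq, div_pow]
  rw [← Finset.sum_div, ← EuclideanSpace.real_norm_sq_eq, div_self hnorm]

theorem alphaR_mulVec_alphaR_mulVec {x : E3} (hx : x ≠ 0) (w : Fin 4 → ℂ) :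
    alphaR x *ᵥ (alphaR x *ᵥ w) = w := by
  have hunit : (fun j => ((x j / ‖x‖ : ℝ) : ℂ)) ⬝ᵥ (fun j => ((x j / ‖x‖ : ℝ) : ℂ)) = 1 := by
    simp only [dotProduct]
    exact_mod_cast sum_div_norm_mul_self hx
  rw [alphaR_eq_alphaDot, alphaDot_mulVec_alphaDot_mulVec, hunit, one_smul]

theorem inv_norm_smul_Lop (j : Fin 3) (ψ : E3 → Fin 4 → ℂ) (x : E3) :
    ‖x‖⁻¹ • Lop j ψ x = -Complex.I •
      ((x (j + 1) / ‖x‖) • pd (j + 2) ψ x - (x (j + 2) / ‖x‖) • pd (j + 1) ψ x) := by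
  simp only [Lop, div_eq_inv_mul, mul_smul, ← smul_sub]
  exact smul_comm _ _ _

theorem alphaR_mulVec_sum_alphaM_mulVec_pd (ψ : E3 → Fin 4 → ℂ) (x : E3) :
    alphaR x *ᵥ ∑ j, alphaM j *ᵥ pd j ψ x = radialD ψ x - ‖x‖⁻¹ • SigL ψ x := by
  have hSigL : ‖x‖⁻¹ • SigL ψ x = -Complex.I • ∑ j, SigM j *ᵥ
      ((x (j + 1) / ‖x‖) • pd (j + 2) ψ x - (x (j + 2) / ‖x‖) • pd (j + 1) ψ x) := by
    simp only [SigL, Finset.smul_sum, ← mulVec_smul, inv_norm_smul_Lop]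
  rw [alphaR_eq_alphaDot, alphaDot_mulVec_sum_alphaM_mulVec, hSigL, neg_smul, sub_neg_eq_add]
  simp only [radialD, Complex.coe_smul]

theorem sum_alphaM_mulVec_pd (ψ : E3 → Fin 4 → ℂ) {x : E3} (hx : x ≠ 0) :
    ∑ j, alphaM j *ᵥ pd j ψ x = alphaR x *ᵥ (radialD ψ x - ‖x‖⁻¹ • SigL ψ x) := by
  rw [← alphaR_mulVec_sum_alphaM_mulVec_pd, alphaR_mulVec_alphaR_mulVec hx]

theorem betaM_mulVec_Kop (ψ : E3 → Fin 4 → ℂ) (x : E3) :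
    betaM *ᵥ Kop ψ x = ψ x + SigL ψ x := by
  rw [Kop, mulVec_mulVec, betaM_mul_self, one_mulVec]

theorem alpha_dot_grad_polar_general (ψ : E3 → Fin 4 → ℂ) (x : E3)
    (_hψ : DifferentiableAt ℝ ψ x) (hx : x ≠ 0) :
    ∑ j, alphaM j *ᵥ (-Complex.I • pd j ψ x) =
      -Complex.I • alphaR x *ᵥ
        (radialD ψ x + ‖x‖⁻¹ • ψ x - ‖x‖⁻¹ • betaM *ᵥ Kop ψ x) := by
  have hK : radialD ψ x + ‖x‖⁻¹ • ψ x - ‖x‖⁻¹ • betaM *ᵥ Kop ψ x =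
      radialD ψ x - ‖x‖⁻¹ • SigL ψ x := by
    rw [betaM_mulVec_Kop, smul_add]
    abel
  simp only [mulVec_smul]
  rw [← Finset.smul_sum, sum_alphaM_mulVec_pd ψ hx, hK]

/-- For `ψ : ℝ³∖{0} → ℂ⁴` smooth and `x ≠ 0`:
`(α·(−i∇))ψ(x) = −i α_r(x)( ∂_rψ(x) + ψ(x)/|x| − (1/|x|) β(Kψ)(x) )`. -/
theorem alpha_dot_grad_polar (ψ : E3 → Fin 4 → ℂ)
    (hψ : ContDiffOn ℝ (⊤ : ℕ∞) ψ {x : E3 | x ≠ 0}) (x : E3) (hx : x ≠ 0) :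
    (∑ j, (alphaM j).mulVec ((-Complex.I) • pd j ψ x))
      = (-Complex.I) • (alphaR x).mulVec
          (radialD ψ x + ‖x‖⁻¹ • ψ x - ‖x‖⁻¹ • betaM.mulVec (Kop ψ x)) := by
  exact alpha_dot_grad_polar_general ψ x
    ((hψ.contDiffAt (isOpen_ne.mem_nhds hx)).differentiableAt (by simp)) hx

end
end
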